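/- Let X_1,...,X_n be bounded real random variables and R ≥ max_i ‖X_i‖_∞. Then ∑_{i=1}^n H(X_i) − I_sym(X_1,...,X_n) ≤ H(X_1,...,X_n), where I_sym is defined via the limsup over N of the normalized log-volumes of permutation micro-states. -/

import Mathlib

open MeasureTheory Filter
open scoped Classical ENNReal

/-- Normalized coordinate sum `κ_N(x) = N⁻¹ ∑_j x_j`. -/
noncomputable def kappa {N : ℕ} (x : Fin N → ℝ) : ℝ := (∑ j, x j) / N

/-- The micro-state set `Δ_R(X₁,…,Xₙ;N,m,δ)`: `n`-tuples of vectors in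
`[-R,R]^N` whose normalized mixed moments up to order `m` approximate the
joint moments of `(X₁,…,Xₙ)` within `δ`. -/
noncomputable def DeltaR {Ω : Type*} [MeasurableSpace Ω] (μ : Measure Ω)
    {n : ℕ} (X : Fin n → Ω → ℝ) (R : ℝ) (N m : ℕ) (δ : ℝ) :
    Set (Fin n → Fin N → ℝ) :=
  {x | (∀ i j, |x i j| ≤ R) ∧
    ∀ k : ℕ, 1 ≤ k → k ≤ m → ∀ idx : Fin k → Fin n,
      |kappa (fun j => ∏ l, x (idx l) j) - ∫ ω, ∏ l, X (idx l) ω ∂μ| < δ}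

/-- The permutation micro-state set `Δ_{sym,R}(X₁,…,Xₙ;N,m,δ) ⊆ S_N^n`:
tuples `(σ₁,…,σₙ)` such that `(σ₁(x₁),…,σₙ(xₙ)) ∈ Δ_R` for some nondecreasing
`x₁,…,xₙ ∈ ℝ^N_≤`. -/
noncomputable def DeltaSymR {Ω : Type*} [MeasurableSpace Ω] (μ : Measure Ω)
    {n : ℕ} (X : Fin n → Ω → ℝ) (R : ℝ) (N m : ℕ) (δ : ℝ) :
    Set (Fin n → Equiv.Perm (Fin N)) :=
  {σ | ∃ x : Fin n → Fin N → ℝ, (∀ i, Monotone (x i)) ∧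
    (fun i j => x i ((σ i)⁻¹ j)) ∈ DeltaR μ X R N m δ}

/-- `(1/N) log γ_{S_N}^{⊗n}(Δ_{sym,R}(X₁,…,Xₙ;N,m,δ))`, the normalized log of
the uniform probability of the permutation micro-states. -/
noncomputable def symQ {Ω : Type*} [MeasurableSpace Ω] (μ : Measure Ω)
    {n : ℕ} (X : Fin n → Ω → ℝ) (R : ℝ) (N m : ℕ) (δ : ℝ) : ℝ :=
  Real.log ((Nat.card (DeltaSymR μ X R N m δ) : ℝ) / (N.factorial : ℝ) ^ n) / N

/-- `(1/N) log λ_N^{⊗n}(Δ_R(X₁,…,Xₙ;N,m,δ))`, the normalized log-volume of the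
micro-states. -/
noncomputable def volQ {Ω : Type*} [MeasurableSpace Ω] (μ : Measure Ω)
    {n : ℕ} (X : Fin n → Ω → ℝ) (R : ℝ) (N m : ℕ) (δ : ℝ) : ℝ :=
  Real.log (volume (DeltaR μ X R N m δ)).toReal / N

/-- The mutual information `I_sym`, via `limsup` in `N` and the limit
(= infimum, by monotonicity) over `m → ∞`, `δ → 0+`. -/
noncomputable def Isym {Ω : Type*} [MeasurableSpace Ω] (μ : Measure Ω)
    {n : ℕ} (X : Fin n → Ω → ℝ) (R : ℝ) : EReal :=
  -(⨅ (m : ℕ) (δ : ℝ) (_ : 0 < δ),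
      Filter.limsup (fun N : ℕ => ((symQ μ X R N m δ : ℝ) : EReal)) atTop)

/-- The upper mutual information `Ī_sym`, via `liminf` in `N`. -/
noncomputable def IsymUpper {Ω : Type*} [MeasurableSpace Ω] (μ : Measure Ω)
    {n : ℕ} (X : Fin n → Ω → ℝ) (R : ℝ) : EReal :=
  -(⨅ (m : ℕ) (δ : ℝ) (_ : 0 < δ),
      Filter.liminf (fun N : ℕ => ((symQ μ X R N m δ : ℝ) : EReal)) atTop)

/-- Boltzmann–Gibbs (differential) entropy of `μ` with respect to a reference
measure `vol`, with value `⊥` (i.e. `-∞`) when `μ` has no density. -/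
noncomputable def diffEntropy {E : Type*} [MeasurableSpace E] (vol μ : Measure E) : EReal :=
  if μ ≪ vol then
    ((∫⁻ x, ENNReal.ofReal (Real.negMulLog (μ.rnDeriv vol x).toReal) ∂vol : ℝ≥0∞) : EReal)
      - ((∫⁻ x, ENNReal.ofReal (-(Real.negMulLog (μ.rnDeriv vol x).toReal)) ∂vol : ℝ≥0∞) : EReal)
  else ⊥

/-- Lemma 1.2 of the paper (assumed): the Boltzmann–Gibbs entropy is the
asymptotic normalized log-volume of the micro-state sets `Δ_R`, the limit in
`N` existing. -/
def MicrostateVolumeFormula {Ω : Type*} [MeasurableSpace Ω] (μ : Measure Ω)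
    {n : ℕ} (X : Fin n → Ω → ℝ) (R : ℝ) : Prop :=
  diffEntropy volume (Measure.map (fun ω (i : Fin n) => X i ω) μ)
      = ⨅ (m : ℕ) (δ : ℝ) (_ : 0 < δ),
          Filter.limsup (fun N : ℕ => ((volQ μ X R N m δ : ℝ) : EReal)) atTop ∧
  diffEntropy volume (Measure.map (fun ω (i : Fin n) => X i ω) μ)
      = ⨅ (m : ℕ) (δ : ℝ) (_ : 0 < δ),
          Filter.liminf (fun N : ℕ => ((volQ μ X R N m δ : ℝ) : EReal)) atTop

/-!
Almost every micro-state of a single variable `X_i` has distinct entries, so its set of micro-states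
has volume at most `N!` times that of the strictly increasing ones. By Voiculescu's lemma any two
increasing micro-states of `X_i` are close in normalized `ℓ¹` distance. Hence, if `(σ₁, …, σₙ)` is a
permutation micro-state, replacing the monotone vectors that witness this by arbitrary strictly
increasing micro-states of `X_1, …, X_n` changes the mixed moments only slightly and leads to a
micro-state of `(X_1, …, X_n)`. Different `(σ₁, …, σₙ)` lead to different micro-states, since a
vector is sorted by at most one permutation into a strictly increasing one. This gives
`|Δ_sym| * ∏ i, vol (Δ_R (X_i)) ≤ (N!) ^ n * vol (Δ_R (X_1, …, X_n))`, and it remains to take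
normalized logarithms and pass to the limit.
-/

section Average

variable {N : ℕ}

theorem kappa_sub (x y : Fin N → ℝ) : kappa (fun j => x j - y j) = kappa x - kappa y := by
  simp only [kappa, Finset.sum_sub_distrib, sub_div]

theorem kappa_const_mul (c : ℝ) (x : Fin N → ℝ) : kappa (fun j => c * x j) = c * kappa x := by
  simp only [kappa, ← Finset.mul_sum, mul_div_assoc]

theorem kappa_sum {ι : Type*} (s : Finset ι) (x : ι → Fin N → ℝ) :
    kappa (fun j => ∑ i ∈ s, x i j) = ∑ i ∈ s, kappa (x i) := by
  simp only [kappa, Finset.sum_comm (s := Finset.univ), Finset.sum_div]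

theorem kappa_mono {x y : Fin N → ℝ} (h : ∀ j, x j ≤ y j) : kappa x ≤ kappa y := by
  unfold kappa
  gcongr with j
  exact h j

theorem kappa_le_of_forall_le {x : Fin N → ℝ} {c : ℝ} (hc : 0 ≤ c) (h : ∀ j, x j ≤ c) :
    kappa x ≤ c := by
  refine div_le_of_le_mul₀ N.cast_nonneg hc ((Finset.sum_le_sum fun j _ => h j).trans_eq ?_)
  simp [mul_comm]

theorem kappa_nonneg {x : Fin N → ℝ} (h : ∀ j, 0 ≤ x j) : 0 ≤ kappa x :=
  div_nonneg (Finset.sum_nonneg fun j _ => h j) N.cast_nonneg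

theorem abs_kappa_le (x : Fin N → ℝ) : |kappa x| ≤ kappa fun j => |x j| := by
  unfold kappa
  rw [abs_div, Nat.abs_cast]
  gcongr
  exact Finset.abs_sum_le_sum_abs _ _

theorem kappa_comp_perm (x : Fin N → ℝ) (τ : Equiv.Perm (Fin N)) :
    kappa (fun j => x (τ j)) = kappa x := by
  simp only [kappa, Equiv.sum_comp τ x]

theorem abs_kappa_sub_kappa_le {x y : Fin N → ℝ} {c : ℝ} (hc : 0 ≤ c)
    (h : ∀ j, |x j - y j| ≤ c) : |kappa x - kappa y| ≤ c := by
  rw [← kappa_sub]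
  exact (abs_kappa_le _).trans (kappa_le_of_forall_le hc h)

end Average

section MonotoneVectors

variable {N : ℕ}

theorem abs_sub_le_mul_indicator_Ioo_add {a b u v : ℝ} (hu : u ∈ Set.Icc a b)
    (hv : v ∈ Set.Icc a b) (huv : ¬(u = a ∧ v = b)) (hvu : ¬(v = a ∧ u = b)) :
    |u - v| ≤ (b - a) * ((Set.Ioo a b).indicator 1 u + (Set.Ioo a b).indicator 1 v) := by
  obtain ⟨hau, hub⟩ := hu
  obtain ⟨hav, hvb⟩ := hv
  simp only [Set.indicator_apply, Set.mem_Ioo, Pi.one_apply]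
  rw [abs_le]
  split_ifs <;> grind

theorem kappa_abs_sub_of_le {u v : Fin N → ℝ} (h : ∀ j, u j ≤ v j) :
    kappa (fun j => |u j - v j|) = |kappa u - kappa v| := by
  rw [abs_sub_comm, abs_of_nonneg (sub_nonneg.2 (kappa_mono h)), ← kappa_sub]
  exact congrArg kappa (funext fun j => by rw [abs_sub_comm, abs_of_nonneg (sub_nonneg.2 (h j))])

theorem le_of_monotone_of_endpoints {ι α : Type*} [LinearOrder ι] [Preorder α] {a b : α}
    {u v : ι → α} (hu : Monotone u) (hv : Monotone v) (hub : ∀ j, u j ≤ b) (hva : ∀ j, a ≤ v j)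
    {i : ι} (hui : u i ≤ a) (hvi : b ≤ v i) (j : ι) : u j ≤ v j := by
  rcases le_total j i with hji | hij
  · exact ((hu hji).trans hui).trans (hva j)
  · exact ((hub j).trans hvi).trans (hv hij)

/-- If `u i = a` and `v i = b` for some `i`, then monotonicity forces `u ≤ v` everywhere, so that
the left side is a difference of averages; otherwise `u` and `v` only differ at indices where one
of them is in the interior of the interval. -/
theorem kappa_abs_sub_le_of_monotone {a b : ℝ} (hab : a ≤ b) {u v : Fin N → ℝ} (hu : Monotone u)
    (hv : Monotone v) (hu_mem : ∀ j, u j ∈ Set.Icc a b) (hv_mem : ∀ j, v j ∈ Set.Icc a b) :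
    kappa (fun j => |u j - v j|) ≤ |kappa u - kappa v|
      + (b - a) * kappa fun j =>
        (Set.Ioo a b).indicator 1 (u j) + (Set.Ioo a b).indicator 1 (v j) := by
  have interior_nonneg : 0 ≤ (b - a) * kappa fun j =>
      (Set.Ioo a b).indicator 1 (u j) + (Set.Ioo a b).indicator 1 (v j) := by
    have indicator_nonneg (s : ℝ) : 0 ≤ (Set.Ioo a b).indicator (1 : ℝ → ℝ) s :=
      Set.indicator_nonneg (fun _ _ => zero_le_one) s
    exact mul_nonneg (sub_nonneg.2 hab)
      (kappa_nonneg fun j => add_nonneg (indicator_nonneg (u j)) (indicator_nonneg (v j)))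
  by_cases huv : ∃ i, u i = a ∧ v i = b
  · obtain ⟨i, hui, hvi⟩ := huv
    rw [kappa_abs_sub_of_le fun j => le_of_monotone_of_endpoints hu hv (fun j => (hu_mem j).2)
      (fun j => (hv_mem j).1) hui.le hvi.ge j]
    exact le_add_of_nonneg_right interior_nonneg
  by_cases hvu : ∃ i, v i = a ∧ u i = b
  · obtain ⟨i, hvi, hui⟩ := hvu
    simp only [abs_sub_comm (u _), abs_sub_comm (kappa u)]
    rw [kappa_abs_sub_of_le fun j => le_of_monotone_of_endpoints hv hu (fun j => (hv_mem j).2)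
      (fun j => (hu_mem j).1) hvi.le hui.ge j]
    exact le_add_of_nonneg_right interior_nonneg
  rw [← kappa_const_mul]
  refine le_add_of_nonneg_of_le (abs_nonneg _) (kappa_mono fun j => ?_)
  exact abs_sub_le_mul_indicator_Ioo_add (hu_mem j) (hv_mem j) (not_exists.1 huv j)
    (not_exists.1 hvu j)

/-- Truncation of a real number to `[a, b]`; the continuous test functions to which moment
closeness is applied. -/
def clamp (a b s : ℝ) : ℝ := max a (min s b)

theorem clamp_mono (a b : ℝ) : Monotone (clamp a b) :=
  fun _ _ h => max_le_max le_rfl (min_le_min h le_rfl)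

theorem continuous_clamp (a b : ℝ) : Continuous (clamp a b) := by
  unfold clamp
  fun_prop

theorem clamp_mem_Icc {a b : ℝ} (hab : a ≤ b) (s : ℝ) : clamp a b s ∈ Set.Icc a b :=
  ⟨le_max_left _ _, max_le hab (min_le_right _ _)⟩

theorem clamp_mem_Ioo_iff {a b s : ℝ} : clamp a b s ∈ Set.Ioo a b ↔ s ∈ Set.Ioo a b := by
  simp only [clamp, Set.mem_Ioo]
  grind

theorem sum_clamp_sub_clamp {t : ℕ → ℝ} (ht : Monotone t) (K : ℕ) {s r : ℝ}
    (hs : s ∈ Set.Icc (t 0) (t K)) (hr : r ∈ Set.Icc (t 0) (t K)) :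
    ∑ k ∈ Finset.range K, (clamp (t k) (t (k + 1)) s - clamp (t k) (t (k + 1)) r) = s - r := by
  have clamp_eq (k : ℕ) (z : ℝ) :
      clamp (t k) (t (k + 1)) z = min z (t (k + 1)) - min z (t k) + t k := by
    have := ht k.le_succ
    unfold clamp
    grind
  have telescope (z : ℝ) (hz : z ∈ Set.Icc (t 0) (t K)) :
      ∑ k ∈ Finset.range K, (min z (t (k + 1)) - min z (t k)) = z - t 0 := by
    rw [Finset.sum_range_sub fun k => min z (t k), min_eq_left hz.2, min_eq_right hz.1]
  simp only [clamp_eq, add_sub_add_right_eq_sub]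
  rw [Finset.sum_sub_distrib, telescope s hs, telescope r hr, sub_sub_sub_cancel_right]

theorem kappa_abs_clamp_sub_le {a b : ℝ} (hab : a ≤ b) {x y : Fin N → ℝ} (hx : Monotone x)
    (hy : Monotone y) :
    kappa (fun j => |clamp a b (x j) - clamp a b (y j)|)
      ≤ |kappa (fun j => clamp a b (x j)) - kappa (fun j => clamp a b (y j))|
        + (b - a) * kappa fun j =>
          (Set.Ioo a b).indicator 1 (x j) + (Set.Ioo a b).indicator 1 (y j) := by
  simpa only [Set.indicator_apply, clamp_mem_Ioo_iff, Pi.one_apply, Function.comp_def] using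
    kappa_abs_sub_le_of_monotone hab ((clamp_mono a b).comp hx) ((clamp_mono a b).comp hy)
      (fun j => clamp_mem_Icc hab (x j)) fun j => clamp_mem_Icc hab (y j)

theorem sum_indicator_Ioo_succ_le_one {t : ℕ → ℝ} (ht : Monotone t) (K : ℕ) (s : ℝ) :
    ∑ k ∈ Finset.range K, (Set.Ioo (t k) (t (k + 1))).indicator (1 : ℝ → ℝ) s ≤ 1 := by
  rw [← Finset.indicator_biUnion_apply (Finset.range K) (fun k => Set.Ioo (t k) (t (k + 1)))
    (ht.pairwise_disjoint_on_Ioo_succ.set_pairwise _)]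
  exact Set.indicator_le_self' (fun _ _ => zero_le_one) s

theorem kappa_abs_sub_le_sum_clamp {t : ℕ → ℝ} (ht : Monotone t) {h : ℝ} (hh : 0 ≤ h)
    (hth : ∀ k, t (k + 1) - t k ≤ h) (K : ℕ) {x y : Fin N → ℝ} (hx : Monotone x) (hy : Monotone y)
    (hxt : ∀ j, x j ∈ Set.Icc (t 0) (t K)) (hyt : ∀ j, y j ∈ Set.Icc (t 0) (t K)) :
    kappa (fun j => |x j - y j|)
      ≤ ∑ k ∈ Finset.range K, |kappa (fun j => clamp (t k) (t (k + 1)) (x j))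
          - kappa (fun j => clamp (t k) (t (k + 1)) (y j))| + h * 2 := by
  set g : ℕ → ℝ → ℝ := fun k => clamp (t k) (t (k + 1))
  set c : ℕ → ℝ → ℝ := fun k => (Set.Ioo (t k) (t (k + 1))).indicator 1
  have c_nonneg (k : ℕ) (s : ℝ) : 0 ≤ c k s := Set.indicator_nonneg (fun _ _ => zero_le_one) s
  have cell (k : ℕ) : kappa (fun j => |g k (x j) - g k (y j)|)
      ≤ |kappa (fun j => g k (x j)) - kappa (fun j => g k (y j))|
        + h * kappa fun j => c k (x j) + c k (y j) := by
    refine (kappa_abs_clamp_sub_le (ht k.le_succ) hx hy).trans ?_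
    have := kappa_nonneg fun j => add_nonneg (c_nonneg k (x j)) (c_nonneg k (y j))
    gcongr
    exact hth k
  have interior : ∑ k ∈ Finset.range K, kappa (fun j => c k (x j) + c k (y j)) ≤ 2 := by
    rw [← kappa_sum]
    refine kappa_le_of_forall_le zero_le_two fun j => ?_
    rw [Finset.sum_add_distrib]
    linarith [sum_indicator_Ioo_succ_le_one ht K (x j), sum_indicator_Ioo_succ_le_one ht K (y j)]
  calc kappa (fun j => |x j - y j|)
      ≤ kappa (fun j => ∑ k ∈ Finset.range K, |g k (x j) - g k (y j)|) := by
        refine kappa_mono fun j => ?_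
        rw [← sum_clamp_sub_clamp ht K (hxt j) (hyt j)]
        exact Finset.abs_sum_le_sum_abs _ _
    _ = ∑ k ∈ Finset.range K, kappa (fun j => |g k (x j) - g k (y j)|) := kappa_sum _ _
    _ ≤ ∑ k ∈ Finset.range K, (|kappa (fun j => g k (x j)) - kappa (fun j => g k (y j))|
        + h * kappa fun j => c k (x j) + c k (y j)) := Finset.sum_le_sum fun k _ => cell k
    _ ≤ ∑ k ∈ Finset.range K, |kappa (fun j => g k (x j)) - kappa (fun j => g k (y j))|
        + h * 2 := by
        rw [Finset.sum_add_distrib, ← Finset.mul_sum]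
        gcongr

end MonotoneVectors

section MomentClose

variable {N : ℕ}

/-- The normalized moments of the vectors `x` and `y` of orders `1, …, m` differ by at most `δ`,
the hypothesis of Voiculescu's approximation lemma. -/
def MomentClose (m : ℕ) (δ : ℝ) (x y : Fin N → ℝ) : Prop :=
  ∀ k, 1 ≤ k → k ≤ m → |kappa (fun j => x j ^ k) - kappa (fun j => y j ^ k)| ≤ δ

theorem MomentClose.abs_kappa_eval_sub_le {m : ℕ} {δ : ℝ} {x y : Fin N → ℝ} (hδ : 0 ≤ δ)
    (h : MomentClose m δ x y) {p : Polynomial ℝ} (hp : p.natDegree ≤ m) :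
    |kappa (fun j => p.eval (x j)) - kappa (fun j => p.eval (y j))|
      ≤ (∑ d ∈ p.support, |p.coeff d|) * δ := by
  have kappa_eval (z : Fin N → ℝ) : kappa (fun j => p.eval (z j))
      = ∑ d ∈ p.support, p.coeff d * kappa (fun j => z j ^ d) := by
    simp only [Polynomial.eval_eq_sum, Polynomial.sum_def, kappa_sum, kappa_const_mul]
  rw [kappa_eval, kappa_eval, ← Finset.sum_sub_distrib, Finset.sum_mul]
  refine (Finset.abs_sum_le_sum_abs _ _).trans (Finset.sum_le_sum fun d hd => ?_)
  rw [← mul_sub, abs_mul]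
  gcongr
  rcases d.eq_zero_or_pos with rfl | hd0
  · simpa using hδ
  · exact h d hd0 ((Polynomial.le_natDegree_of_mem_supp d hd).trans hp)

theorem eventually_abs_kappa_comp_sub_le_of_momentClose {a b : ℝ} {f : ℝ → ℝ}
    (hf : ContinuousOn f (Set.Icc a b)) {ε : ℝ} (hε : 0 < ε) :
    ∀ᶠ q : ℕ × ℝ in atTop ×ˢ nhdsWithin 0 (Set.Ioi 0), ∀ (N : ℕ) (x y : Fin N → ℝ),
      (∀ j, x j ∈ Set.Icc a b) → (∀ j, y j ∈ Set.Icc a b) → MomentClose q.1 q.2 x y →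
        |kappa (fun j => f (x j)) - kappa (fun j => f (y j))| ≤ ε := by
  obtain ⟨p, hp⟩ := exists_polynomial_near_of_continuousOn a b f hf (ε / 3) (by positivity)
  set C : ℝ := ∑ d ∈ p.support, |p.coeff d|
  have hCδ : ∀ᶠ δ in nhdsWithin (0 : ℝ) (Set.Ioi 0), C * δ ≤ ε / 3 := by
    have hlim : Tendsto (fun δ => C * δ) (nhdsWithin 0 (Set.Ioi 0)) (nhds (C * 0)) :=
      (tendsto_id.mono_left nhdsWithin_le_nhds).const_mul C
    exact hlim.eventually_le_const (by rw [mul_zero]; positivity)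
  filter_upwards [(eventually_ge_atTop p.natDegree).prod_mk (hCδ.and self_mem_nhdsWithin)]
    with q ⟨hdeg, hCq, hq⟩ N x y hx hy hxy
  have near (z : Fin N → ℝ) (hz : ∀ j, z j ∈ Set.Icc a b) :
      |kappa (fun j => p.eval (z j)) - kappa (fun j => f (z j))| ≤ ε / 3 :=
    abs_kappa_sub_kappa_le (by positivity) fun j => (hp _ (hz j)).le
  have close := (hxy.abs_kappa_eval_sub_le (le_of_lt hq) hdeg).trans hCq
  have := abs_le.1 (near x hx)
  have := abs_le.1 (near y hy)
  have := abs_le.1 close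
  exact abs_le.2 ⟨by linarith, by linarith⟩

theorem eventually_kappa_abs_sub_le_of_momentClose (R : ℝ) {η : ℝ} (hη : 0 < η) :
    ∀ᶠ q : ℕ × ℝ in atTop ×ˢ nhdsWithin 0 (Set.Ioi 0), ∀ (N : ℕ) (x y : Fin N → ℝ),
      Monotone x → Monotone y → (∀ j, |x j| ≤ R) → (∀ j, |y j| ≤ R) → MomentClose q.1 q.2 x y →
        kappa (fun j => |x j - y j|) ≤ η := by
  set h := η / 4 with hh
  obtain ⟨K, hK⟩ := exists_nat_ge (2 * R / h)
  set t : ℕ → ℝ := fun k => -R + k * h with ht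
  have ht_mono : Monotone t := fun _ _ hkl => by simp only [ht]; gcongr
  have ht_step (k : ℕ) : t (k + 1) - t k ≤ h := by simp only [ht]; push_cast; linarith
  have mem_grid {s : ℝ} (hs : |s| ≤ R) : s ∈ Set.Icc (t 0) (t K) := by
    have := (div_le_iff₀ (by positivity)).1 hK
    simp only [ht, Set.mem_Icc]
    constructor <;> push_cast <;> linarith [abs_le.1 hs]
  filter_upwards [(Filter.eventually_all_finset (Finset.range K)).2 fun k _ =>
    eventually_abs_kappa_comp_sub_le_of_momentClose
      (continuous_clamp (t k) (t (k + 1))).continuousOn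
      (show 0 < η / (2 * (K + 1)) by positivity)] with q hq N x y hx hy hxR hyR hxy
  refine (kappa_abs_sub_le_sum_clamp ht_mono (by positivity) ht_step K hx hy
    (fun j => mem_grid (hxR j)) (fun j => mem_grid (hyR j))).trans ?_
  have clamps := Finset.sum_le_card_nsmul _ _ _ fun k hk => hq k hk N x y
    (fun j => mem_grid (hxR j)) (fun j => mem_grid (hyR j)) hxy
  have small : K * (η / (2 * (K + 1))) ≤ η / 2 := by
    rw [mul_div_assoc', div_le_div_iff₀ (by positivity) two_pos]
    linarith
  rw [Finset.card_range, nsmul_eq_mul] at clamps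
  linarith

end MomentClose

section SortedVectors

variable {N : ℕ}

theorem volume_preimage_comp_perm {ι α : Type*} [Fintype ι] [MeasureSpace α]
    [SigmaFinite (volume : Measure α)] (τ : Equiv.Perm ι) (A : Set (ι → α)) :
    volume ((fun w => w ∘ τ) ⁻¹' A) = volume A :=
  (volume_preserving_arrowCongr' τ.symm (.refl α) (.id volume)).measure_preimage_equiv A

theorem ae_injective {ι : Type*} [Fintype ι] :
    ∀ᵐ w : ι → ℝ, Function.Injective w := by
  have ae_ne (a b : ι) (hab : a ≠ b) : ∀ᵐ w : ι → ℝ, w a ≠ w b := by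
    let S : Submodule ℝ (ι → ℝ) :=
      LinearMap.ker (LinearMap.proj (R := ℝ) (φ := fun _ : ι => ℝ) a - LinearMap.proj b)
    have hS : S ≠ ⊤ := fun h => by
      have : Pi.single a (1 : ℝ) ∈ S := h ▸ Submodule.mem_top
      simp [S, hab.symm] at this
    refine measure_mono_null (fun w hw => ?_) (Measure.addHaar_submodule volume S hS)
    simpa [S, sub_eq_zero] using hw
  filter_upwards [ae_all_iff.2 fun a => ae_all_iff.2 fun b => ae_all_iff.2 (ae_ne a b)]
    with w hw a b hab
  exact not_imp_not.1 (hw a b) hab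

theorem volume_le_factorial_mul_strictMono {A : Set (Fin N → ℝ)}
    (hA : ∀ x ∈ A, ∀ τ : Equiv.Perm (Fin N), x ∘ τ ∈ A) :
    volume A ≤ N.factorial * volume {x | StrictMono x ∧ x ∈ A} := by
  set S : Set (Fin N → ℝ) := {x | StrictMono x ∧ x ∈ A}
  have hcover : A ≤ᵐ[volume] ⋃ τ : Equiv.Perm (Fin N), (fun w => w ∘ τ) ⁻¹' S := by
    filter_upwards [ae_injective] with w hw hwA
    refine Set.mem_iUnion.2 ⟨Tuple.sort w, ?_, hA w hwA _⟩
    exact (Tuple.monotone_sort w).strictMono_of_injective (hw.comp (Tuple.sort w).injective)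
  calc volume A ≤ ∑ τ : Equiv.Perm (Fin N), volume ((fun w : Fin N → ℝ => w ∘ τ) ⁻¹' S) :=
        (measure_mono_ae hcover).trans (measure_iUnion_fintype_le _ _)
    _ = ∑ _τ : Equiv.Perm (Fin N), volume S := Finset.sum_congr rfl fun τ _ =>
        volume_preimage_comp_perm τ S
    _ = N.factorial * volume S := by
        rw [Finset.sum_const, Finset.card_univ, Fintype.card_perm, Fintype.card_fin, nsmul_eq_mul]

theorem perm_eq_of_strictMono_comp {α : Type*} [PartialOrder α] {w : Fin N → α}
    {σ τ : Equiv.Perm (Fin N)} (hσ : StrictMono (w ∘ σ)) (hτ : StrictMono (w ∘ τ)) : σ = τ := by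
  have hw : Function.Injective w := by
    simpa [Function.comp_assoc] using hσ.injective.comp σ.symm.injective
  exact Equiv.coe_fn_injective
    (hw.comp_left (Tuple.unique_monotone hσ.monotone hτ.monotone))

theorem measurableSet_setOf_strictMono : MeasurableSet {x : Fin N → ℝ | StrictMono x} := by
  simp only [StrictMono, Set.ofPred_forall]
  exact .iInter fun a => .iInter fun b => .iInter fun _ =>
    measurableSet_lt (measurable_pi_apply a) (measurable_pi_apply b)

theorem card_mul_prod_volume_le {ι : Type*} [Fintype ι] {S : Set (ι → Equiv.Perm (Fin N))}
    {A : ι → Set (Fin N → ℝ)} (hA : ∀ i, MeasurableSet (A i))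
    (hmono : ∀ i, ∀ y ∈ A i, StrictMono y) {D : Set (ι → Fin N → ℝ)}
    (hD : ∀ σ ∈ S, ∀ y : ι → Fin N → ℝ, (∀ i, y i ∈ A i) → (fun i j => y i ((σ i)⁻¹ j)) ∈ D) :
    Nat.card S * ∏ i, volume (A i) ≤ volume D := by
  set C : (ι → Equiv.Perm (Fin N)) → Set (ι → Fin N → ℝ) :=
    fun σ => Set.pi Set.univ fun i => (fun w => w ∘ σ i) ⁻¹' A i
  have C_meas (σ) : MeasurableSet (C σ) :=
    .univ_pi fun i => measurableSet_preimage (by fun_prop) (hA i)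
  have volume_C (σ) : volume (C σ) = ∏ i, volume (A i) := by
    rw [volume_pi_pi]
    exact Finset.prod_congr rfl fun i _ => volume_preimage_comp_perm (σ i) (A i)
  have C_disjoint : Pairwise (Function.onFun Disjoint fun σ : S => C σ) := by
    refine fun σ τ hne => Set.disjoint_left.2 fun w hσ hτ => hne (Subtype.ext (funext fun i => ?_))
    exact perm_eq_of_strictMono_comp (hmono i _ (hσ i trivial)) (hmono i _ (hτ i trivial))
  have C_subset (σ : S) : C σ ⊆ D := fun w hw => by
    simpa using hD σ σ.2 (fun i => w i ∘ σ.1 i) fun i => hw i trivial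
  calc (Nat.card S : ℝ≥0∞) * ∏ i, volume (A i) = volume (⋃ σ : S, C σ) := by
        rw [measure_iUnion C_disjoint fun σ => C_meas σ, tsum_fintype]
        simp only [volume_C, Finset.sum_const, Finset.card_univ, nsmul_eq_mul,
          Nat.card_eq_fintype_card]
    _ ≤ volume D := measure_mono (Set.iUnion_subset C_subset)

end SortedVectors

section Sampling

variable {Ω : Type*} [MeasurableSpace Ω] {μ : Measure Ω} [IsProbabilityMeasure μ]

theorem ae_tendsto_average_infinitePi {f : Ω → ℝ} (hf : Integrable f μ) :
    ∀ᵐ w ∂Measure.infinitePi fun _ : ℕ => μ, Tendsto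
      (fun N : ℕ => (∑ j ∈ Finset.range N, f (w j)) / N) atTop (nhds (∫ ω, f ω ∂μ)) := by
  let P : Measure (ℕ → Ω) := Measure.infinitePi fun _ => μ
  have eval_mp (j : ℕ) : MeasurePreserving (fun w : ℕ → Ω => w j) P μ :=
    measurePreserving_eval_infinitePi (fun _ => μ) j
  have f_aemeas (j : ℕ) : AEMeasurable f (P.map fun w => w j) := by
    rw [(eval_mp j).map_eq]
    exact hf.aemeasurable
  have indep : Pairwise fun i j =>
      ProbabilityTheory.IndepFun (fun w => f (w i)) (fun w => f (w j)) P := fun i j hij =>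
    have coord_indep := ProbabilityTheory.iIndepFun_infinitePi (P := fun _ : ℕ => μ)
      (X := fun _ ω => ω) fun _ => measurable_id
    (coord_indep.indepFun hij).comp₀ (eval_mp i).aemeasurable (eval_mp j).aemeasurable
      (f_aemeas i) (f_aemeas j)
  have identDistrib (j : ℕ) :
      ProbabilityTheory.IdentDistrib (fun w => f (w j)) (fun w => f (w 0)) P P :=
    have coord_identDistrib : ProbabilityTheory.IdentDistrib (fun w : ℕ → Ω => w j) _ P P :=
      ⟨(eval_mp j).aemeasurable, (eval_mp 0).aemeasurable,
        (eval_mp j).map_eq.trans (eval_mp 0).map_eq.symm⟩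
    coord_identDistrib.comp_of_aemeasurable (f_aemeas j)
  have expectation : ∫ w, f (w 0) ∂P = ∫ ω, f ω ∂μ := by
    rw [← integral_map (eval_mp 0).aemeasurable (f_aemeas 0).aestronglyMeasurable,
      (eval_mp 0).map_eq]
  have strong_law := ProbabilityTheory.strong_law_ae_real (μ := P) (fun j w => f (w j))
    ((eval_mp 0).integrable_comp_of_integrable hf) indep identDistrib
  rwa [expectation] at strong_law

theorem exists_seq_forall_tendsto_average {ι : Type*} [Countable ι] {f : ι → Ω → ℝ}
    (hf : ∀ a, Integrable (f a) μ) {p : Ω → Prop} (hp : ∀ᵐ ω ∂μ, p ω) :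
    ∃ w : ℕ → Ω, (∀ j, p (w j)) ∧ ∀ a, Tendsto
      (fun N : ℕ => (∑ j ∈ Finset.range N, f a (w j)) / N) atTop (nhds (∫ ω, f a ω ∂μ)) := by
  have samples : ∀ᵐ w ∂Measure.infinitePi fun _ : ℕ => μ, ∀ j, p (w j) := ae_all_iff.2 fun j =>
    (measurePreserving_eval_infinitePi (fun _ => μ) j).quasiMeasurePreserving.ae hp
  exact (samples.and (ae_all_iff.2 fun a => ae_tendsto_average_infinitePi (hf a))).exists

end Sampling

section Microstates

variable {Ω : Type*} [MeasurableSpace Ω] {μ : Measure Ω} {n : ℕ} {X : Fin n → Ω → ℝ} {R : ℝ}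
  {N m : ℕ} {δ : ℝ}

theorem continuous_kappa_prod (idx : Fin m → Fin n) :
    Continuous fun x : Fin n → Fin N → ℝ => kappa fun j => ∏ l, x (idx l) j := by
  unfold kappa
  fun_prop

variable (n N R) in
/-- The box `([-R, R]^N)^n` containing the micro-states. -/
def microstateBox : Set (Fin n → Fin N → ℝ) :=
  Set.univ.pi fun _ => Set.univ.pi fun _ => Set.Icc (-R) R

variable (μ X N m δ) in
/-- The set cut out by the moment conditions of `DeltaR`, without the bound on the entries. -/
def momentNhd : Set (Fin n → Fin N → ℝ) :=
  {x | ∀ k, 1 ≤ k → k ≤ m → ∀ idx : Fin k → Fin n,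
    |kappa (fun j => ∏ l, x (idx l) j) - ∫ ω, ∏ l, X (idx l) ω ∂μ| < δ}

theorem DeltaR_eq_inter : DeltaR μ X R N m δ = microstateBox n R N ∩ momentNhd μ X N m δ := by
  ext x
  simp only [DeltaR, microstateBox, momentNhd, Set.mem_inter_iff, Set.mem_univ_pi, Set.mem_Icc,
    ← abs_le, Set.mem_ofPred_eq]

theorem isOpen_momentNhd : IsOpen (momentNhd μ X N m δ) := by
  have : momentNhd μ X N m δ = ⋂ k ∈ Finset.Icc 1 m, ⋂ idx : Fin k → Fin n,
      {x | |kappa (fun j => ∏ l, x (idx l) j) - ∫ ω, ∏ l, X (idx l) ω ∂μ| < δ} := by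
    ext x
    simp [momentNhd]
  rw [this]
  exact isOpen_biInter_finset fun k _ => isOpen_iInter_of_finite fun idx =>
    isOpen_lt ((continuous_kappa_prod idx).sub continuous_const).abs continuous_const

theorem isCompact_microstateBox : IsCompact (microstateBox n R N) :=
  isCompact_univ_pi fun _ => isCompact_univ_pi fun _ => isCompact_Icc

theorem measurableSet_DeltaR : MeasurableSet (DeltaR μ X R N m δ) := by
  rw [DeltaR_eq_inter]
  exact isCompact_microstateBox.measurableSet.inter isOpen_momentNhd.measurableSet

theorem volume_DeltaR_ne_top : volume (DeltaR μ X R N m δ) ≠ ⊤ := by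
  rw [DeltaR_eq_inter]
  exact measure_ne_top_of_subset Set.inter_subset_left isCompact_microstateBox.measure_ne_top

theorem volume_DeltaR_pos (hR : 0 < R) (h : (DeltaR μ X R N m δ).Nonempty) :
    0 < volume (DeltaR μ X R N m δ) := by
  let openBox : Set (Fin n → Fin N → ℝ) :=
    Set.univ.pi fun _ => Set.univ.pi fun _ => Set.Ioo (-R) R
  have isOpen_openBox : IsOpen openBox :=
    isOpen_set_pi Set.finite_univ fun _ _ => isOpen_set_pi Set.finite_univ fun _ _ => isOpen_Ioo
  have closure_openBox : closure openBox = microstateBox n R N := by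
    simp only [openBox, microstateBox, closure_pi_set, closure_Ioo (neg_lt_self hR).ne]
  have openBox_subset : openBox ⊆ microstateBox n R N := closure_openBox ▸ subset_closure
  rw [DeltaR_eq_inter] at h ⊢
  obtain ⟨x, hx, hx'⟩ := h
  have hne : (momentNhd μ X N m δ ∩ openBox).Nonempty :=
    mem_closure_iff.1 (closure_openBox ▸ hx) _ isOpen_momentNhd hx'
  refine ((isOpen_momentNhd.inter isOpen_openBox).measure_pos volume hne).trans_le
    (measure_mono ?_)
  exact fun y hy => ⟨openBox_subset hy.2, hy.1⟩

theorem eventually_DeltaR_nonempty [IsProbabilityMeasure μ] (hmeas : ∀ i, AEMeasurable (X i) μ)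
    (hbdd : ∀ i, ∀ᵐ ω ∂μ, |X i ω| ≤ R) (m : ℕ) (hδ : 0 < δ) :
    ∀ᶠ N in atTop, (DeltaR μ X R N m δ).Nonempty := by
  have bdd_all : ∀ᵐ ω ∂μ, ∀ i, |X i ω| ≤ R := ae_all_iff.2 hbdd
  have integrable_prod (a : Σ k : ℕ, Fin k → Fin n) :
      Integrable (fun ω => ∏ l, X (a.2 l) ω) μ := by
    refine .of_bound (Finset.aemeasurable_fun_prod _ fun l _ => hmeas (a.2 l)).aestronglyMeasurable
      (R ^ a.1) (bdd_all.mono fun ω hω => ?_)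
    rw [Real.norm_eq_abs, Finset.abs_prod]
    exact (Finset.prod_le_prod (fun l _ => abs_nonneg _) fun l _ => hω (a.2 l)).trans_eq (by simp)
  obtain ⟨w, hw, hlim⟩ := exists_seq_forall_tendsto_average integrable_prod bdd_all
  have close : ∀ᶠ N : ℕ in atTop, ∀ k ∈ Finset.Icc 1 m, ∀ idx : Fin k → Fin n,
      |(∑ j ∈ Finset.range N, ∏ l, X (idx l) (w j)) / N - ∫ ω, ∏ l, X (idx l) ω ∂μ| < δ :=
    (Filter.eventually_all_finset _).2 fun k _ => eventually_all.2 fun idx =>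
      Metric.tendsto_nhds.1 (hlim ⟨k, idx⟩) δ hδ
  filter_upwards [close] with N hN
  refine ⟨fun i j => X i (w j), fun i j => hw j i, fun k hk hkm idx => ?_⟩
  rw [kappa, Fin.sum_univ_eq_sum_range fun j => ∏ l, X (idx l) (w j)]
  exact hN k (Finset.mem_Icc.2 ⟨hk, hkm⟩) idx

theorem DeltaSymR_nonempty (h : (DeltaR μ X R N m δ).Nonempty) :
    (DeltaSymR μ X R N m δ).Nonempty := by
  obtain ⟨x, hx⟩ := h
  exact ⟨fun i => Tuple.sort (x i), fun i => x i ∘ Tuple.sort (x i),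
    fun i => Tuple.monotone_sort _, by simpa using hx⟩

end Microstates

section SingleVariable

variable {Ω : Type*} [MeasurableSpace Ω] {μ : Measure Ω} {Y : Ω → ℝ} {R : ℝ} {N m : ℕ} {δ : ℝ}

variable (μ Y R N m δ) in
/-- The micro-states of a single variable `Y`, as vectors in `ℝ^N` rather than families of vectors
indexed by `Fin 1`. -/
def singleDeltaR : Set (Fin N → ℝ) :=
  {y | (fun _ : Fin 1 => y) ∈ DeltaR μ (fun _ : Fin 1 => Y) R N m δ}

variable (μ Y R N m δ) in
/-- The strictly increasing micro-states of a single variable `Y`, from which the micro-states of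
a family are assembled by permuting coordinates. -/
def sortedDeltaR : Set (Fin N → ℝ) :=
  {y | StrictMono y ∧ y ∈ singleDeltaR μ Y R N m δ}

theorem mem_singleDeltaR_iff {y : Fin N → ℝ} : y ∈ singleDeltaR μ Y R N m δ ↔
    (∀ j, |y j| ≤ R) ∧
      ∀ k, 1 ≤ k → k ≤ m → |kappa (fun j => y j ^ k) - ∫ ω, Y ω ^ k ∂μ| < δ := by
  simp [singleDeltaR, DeltaR]

theorem comp_perm_mem_singleDeltaR {y : Fin N → ℝ} (hy : y ∈ singleDeltaR μ Y R N m δ)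
    (τ : Equiv.Perm (Fin N)) : y ∘ τ ∈ singleDeltaR μ Y R N m δ := by
  rw [mem_singleDeltaR_iff] at hy ⊢
  refine ⟨fun j => hy.1 (τ j), fun k hk hkm => ?_⟩
  simpa only [Function.comp_apply, kappa_comp_perm fun j => y j ^ k] using hy.2 k hk hkm

theorem volume_singleDeltaR :
    volume (singleDeltaR μ Y R N m δ) = volume (DeltaR μ (fun _ : Fin 1 => Y) R N m δ) :=
  (volume_preserving_funUnique (Fin 1) (Fin N → ℝ)).symm.measure_preimage_equiv _

theorem measurableSet_sortedDeltaR : MeasurableSet (sortedDeltaR μ Y R N m δ) :=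
  measurableSet_setOf_strictMono.inter
    (measurableSet_preimage (by fun_prop) measurableSet_DeltaR)

theorem volume_DeltaR_le_factorial_mul_volume_sortedDeltaR :
    volume (DeltaR μ (fun _ : Fin 1 => Y) R N m δ)
      ≤ N.factorial * volume (sortedDeltaR μ Y R N m δ) := by
  rw [← volume_singleDeltaR]
  exact volume_le_factorial_mul_strictMono fun _ hy τ => comp_perm_mem_singleDeltaR hy τ

end SingleVariable

section Perturbation

variable {Ω : Type*} [MeasurableSpace Ω] {μ : Measure Ω} {n : ℕ} {X : Fin n → Ω → ℝ} {R : ℝ}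
  {N m : ℕ} {δ : ℝ}

theorem norm_prod_sub_prod_le {ι A : Type*} [NormedCommRing A] [NormOneClass A]
    (s : Finset ι) {C : ℝ} (hC : 1 ≤ C) {a b : ι → A} (ha : ∀ i ∈ s, ‖a i‖ ≤ C)
    (hb : ∀ i ∈ s, ‖b i‖ ≤ C) :
    ‖∏ i ∈ s, a i - ∏ i ∈ s, b i‖ ≤ C ^ s.card * ∑ i ∈ s, ‖a i - b i‖ := by
  induction s using Finset.cons_induction with
  | empty => simp
  | cons i s hi ih =>
    simp only [Finset.forall_mem_cons] at ha hb
    have tail : ‖∏ l ∈ s, b l‖ ≤ C ^ (s.card + 1) :=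
      calc ‖∏ l ∈ s, b l‖ ≤ ∏ l ∈ s, ‖b l‖ := Finset.norm_prod_le _ _
        _ ≤ ∏ _l ∈ s, C := Finset.prod_le_prod (fun l _ => norm_nonneg (b l)) hb.2
        _ = C ^ s.card := Finset.prod_const C
        _ ≤ C ^ (s.card + 1) := pow_le_pow_right₀ hC s.card.le_succ
    simp only [Finset.prod_cons, Finset.sum_cons, Finset.card_cons]
    calc ‖a i * ∏ l ∈ s, a l - b i * ∏ l ∈ s, b l‖
        = ‖(a i - b i) * ∏ l ∈ s, b l + a i * (∏ l ∈ s, a l - ∏ l ∈ s, b l)‖ := by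
          congr 1
          ring
      _ ≤ ‖a i - b i‖ * ‖∏ l ∈ s, b l‖ + ‖a i‖ * ‖∏ l ∈ s, a l - ∏ l ∈ s, b l‖ :=
          (norm_add_le _ _).trans (add_le_add (norm_mul_le _ _) (norm_mul_le _ _))
      _ ≤ ‖a i - b i‖ * C ^ (s.card + 1) + C * (C ^ s.card * ∑ l ∈ s, ‖a l - b l‖) := by
          gcongr
          · exact ha.1
          · exact ih ha.2 hb.2
      _ = C ^ (s.card + 1) * (‖a i - b i‖ + ∑ l ∈ s, ‖a l - b l‖) := by ring

theorem abs_kappa_prod_sub_kappa_prod_le {ι : Type*} (s : Finset ι) {C : ℝ} (hC : 1 ≤ C)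
    {x y : ι → Fin N → ℝ} (hx : ∀ i ∈ s, ∀ j, |x i j| ≤ C) (hy : ∀ i ∈ s, ∀ j, |y i j| ≤ C) :
    |kappa (fun j => ∏ i ∈ s, x i j) - kappa (fun j => ∏ i ∈ s, y i j)|
      ≤ C ^ s.card * ∑ i ∈ s, kappa fun j => |x i j - y i j| := by
  rw [← kappa_sub, ← kappa_sum, ← kappa_const_mul]
  exact (abs_kappa_le _).trans (kappa_mono fun j =>
    norm_prod_sub_prod_le (A := ℝ) s hC (fun i hi => hx i hi j) fun i hi => hy i hi j)

theorem mem_DeltaR_of_kappa_abs_sub_le {x y : Fin n → Fin N → ℝ} (hx : x ∈ DeltaR μ X R N m δ)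
    (hy : ∀ i j, |y i j| ≤ R) {η ε : ℝ} (hxy : ∀ i, kappa (fun j => |y i j - x i j|) ≤ η)
    (hε : max R 1 ^ m * m * η ≤ ε) : y ∈ DeltaR μ X R N m (δ + ε) := by
  refine ⟨hy, fun k hk hkm idx => ?_⟩
  have hη : 0 ≤ η := (kappa_nonneg fun _ => abs_nonneg _).trans (hxy (idx ⟨0, hk⟩))
  have hR : 1 ≤ max R 1 := le_max_right R 1
  have close : |kappa (fun j => ∏ l, y (idx l) j) - kappa (fun j => ∏ l, x (idx l) j)| ≤ ε :=
    calc _ ≤ max R 1 ^ k * ∑ l, kappa (fun j => |y (idx l) j - x (idx l) j|) := by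
          simpa using abs_kappa_prod_sub_kappa_prod_le Finset.univ hR
            (fun l _ j => (hy (idx l) j).trans (le_max_left R 1))
            (fun l _ j => (hx.1 (idx l) j).trans (le_max_left R 1))
      _ ≤ max R 1 ^ k * (k * η) := by
          gcongr
          simpa using Finset.sum_le_card_nsmul Finset.univ _ η fun l _ => hxy (idx l)
      _ = max R 1 ^ k * k * η := (mul_assoc _ _ _).symm
      _ ≤ max R 1 ^ m * m * η := by gcongr
      _ ≤ ε := hε
  rw [add_comm δ]
  exact (abs_sub_le _ _ _).trans_lt (add_lt_add_of_le_of_lt close (hx.2 k hk hkm idx))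

theorem DeltaR_subset {m' : ℕ} {δ' : ℝ} (hm : m ≤ m') (hδ : δ' ≤ δ) :
    DeltaR μ X R N m' δ' ⊆ DeltaR μ X R N m δ :=
  fun _ hx => ⟨hx.1, fun k hk hkm idx => (hx.2 k hk (hkm.trans hm) idx).trans_le hδ⟩

theorem apply_mem_singleDeltaR {x : Fin n → Fin N → ℝ} (hx : x ∈ DeltaR μ X R N m δ)
    (i : Fin n) : x i ∈ singleDeltaR μ (X i) R N m δ :=
  mem_singleDeltaR_iff.2 ⟨hx.1 i, fun k hk hkm => by simpa using hx.2 k hk hkm fun _ => i⟩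

theorem momentClose_of_mem_singleDeltaR {Y : Ω → ℝ} {x y : Fin N → ℝ}
    (hx : x ∈ singleDeltaR μ Y R N m δ) (hy : y ∈ singleDeltaR μ Y R N m δ) :
    MomentClose m (2 * δ) x y := fun k hk hkm => by
  rw [mem_singleDeltaR_iff] at hx hy
  rw [two_mul]
  refine (abs_sub_le _ (∫ ω, Y ω ^ k ∂μ) _).trans (add_le_add (hx.2 k hk hkm).le ?_)
  exact (abs_sub_comm _ _).trans_le (hy.2 k hk hkm).le

theorem exists_permuted_sortedDeltaR_mem_DeltaR (μ : Measure Ω) (X : Fin n → Ω → ℝ) (R : ℝ) (m : ℕ)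
    (hδ : 0 < δ) : ∃ (m' : ℕ) (δ' : ℝ), 0 < δ' ∧ ∀ N, ∀ σ ∈ DeltaSymR μ X R N m' δ',
      ∀ y : Fin n → Fin N → ℝ, (∀ i, y i ∈ sortedDeltaR μ (X i) R N m' δ') →
        (fun i j => y i ((σ i)⁻¹ j)) ∈ DeltaR μ X R N m δ := by
  obtain ⟨η, hη, hηδ⟩ := exists_pos_mul_lt (half_pos hδ) (max R 1 ^ m * m)
  obtain ⟨⟨m₀, d⟩, (hd : 0 < d), voiculescu⟩ :=
    ((eventually_mem_nhdsWithin.prod_inr _).and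
      (eventually_kappa_abs_sub_le_of_momentClose R hη)).exists
  refine ⟨max m m₀, min (δ / 2) (d / 2), by positivity, fun N σ hσ y hy => ?_⟩
  obtain ⟨x, x_mono, hx⟩ := hσ
  have x_mem (i) : x i ∈ singleDeltaR μ (X i) R N (max m m₀) (min (δ / 2) (d / 2)) := by
    simpa [Function.comp_def] using
      comp_perm_mem_singleDeltaR (apply_mem_singleDeltaR hx i) (σ i)
  have close (i) : kappa (fun j => |y i j - x i j|) ≤ η := by
    refine voiculescu N (y i) (x i) (hy i).1.monotone (x_mono i)
      (mem_singleDeltaR_iff.1 (hy i).2).1 (mem_singleDeltaR_iff.1 (x_mem i)).1 fun k hk hkm => ?_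
    refine (momentClose_of_mem_singleDeltaR (hy i).2 (x_mem i) k hk
      (hkm.trans (le_max_right _ _))).trans ?_
    linarith [min_le_right (δ / 2) (d / 2)]
  rw [← add_halves δ]
  refine mem_DeltaR_of_kappa_abs_sub_le (DeltaR_subset (le_max_left _ _) (min_le_left _ _) hx)
    (fun i j => (mem_singleDeltaR_iff.1 (hy i).2).1 _) (fun i => ?_) hηδ.le
  exact (kappa_comp_perm (fun j => |y i j - x i j|) (σ i)⁻¹).trans_le (close i)

end Perturbation

section VolumeInequality

variable {Ω : Type*} [MeasurableSpace Ω] {μ : Measure Ω} {n : ℕ} {X : Fin n → Ω → ℝ} {R : ℝ}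
  {N m m' : ℕ} {δ δ' : ℝ}

theorem card_DeltaSymR_mul_prod_volume_le
    (hperm : ∀ σ ∈ DeltaSymR μ X R N m' δ', ∀ y : Fin n → Fin N → ℝ,
      (∀ i, y i ∈ sortedDeltaR μ (X i) R N m' δ') →
        (fun i j => y i ((σ i)⁻¹ j)) ∈ DeltaR μ X R N m δ) :
    Nat.card (DeltaSymR μ X R N m' δ') * ∏ i, volume (DeltaR μ (fun _ : Fin 1 => X i) R N m' δ')
      ≤ N.factorial ^ n * volume (DeltaR μ X R N m δ) :=
  calc (Nat.card (DeltaSymR μ X R N m' δ') : ℝ≥0∞)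
        * ∏ i, volume (DeltaR μ (fun _ : Fin 1 => X i) R N m' δ')
      ≤ Nat.card (DeltaSymR μ X R N m' δ')
        * ∏ i, (N.factorial * volume (sortedDeltaR μ (X i) R N m' δ')) := by
        gcongr
        exact volume_DeltaR_le_factorial_mul_volume_sortedDeltaR
    _ = N.factorial ^ n * (Nat.card (DeltaSymR μ X R N m' δ')
        * ∏ i, volume (sortedDeltaR μ (X i) R N m' δ')) := by
        rw [Finset.prod_mul_distrib, Finset.prod_const, Finset.card_univ, Fintype.card_fin,
          mul_left_comm]
    _ ≤ N.factorial ^ n * volume (DeltaR μ X R N m δ) := by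
        gcongr
        exact card_mul_prod_volume_le (fun _ => measurableSet_sortedDeltaR) (fun _ _ hy => hy.1)
          hperm

theorem symQ_add_sum_volQ_le (hS : (DeltaSymR μ X R N m' δ').Nonempty)
    (hpos : ∀ i, 0 < volume (DeltaR μ (fun _ : Fin 1 => X i) R N m' δ'))
    (hle : Nat.card (DeltaSymR μ X R N m' δ')
        * ∏ i, volume (DeltaR μ (fun _ : Fin 1 => X i) R N m' δ')
      ≤ N.factorial ^ n * volume (DeltaR μ X R N m δ)) :
    symQ μ X R N m' δ' + ∑ i, volQ μ (fun _ : Fin 1 => X i) R N m' δ' ≤ volQ μ X R N m δ := by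
  have := hS.to_subtype
  have card_pos : (0 : ℝ) < Nat.card (DeltaSymR μ X R N m' δ') := by exact_mod_cast Nat.card_pos
  have volume_pos (i) : 0 < (volume (DeltaR μ (fun _ : Fin 1 => X i) R N m' δ')).toReal :=
    ENNReal.toReal_pos (hpos i).ne' volume_DeltaR_ne_top
  have prod_pos := Finset.prod_pos fun i (_ : i ∈ Finset.univ) => volume_pos i
  have volume_le := ENNReal.toReal_mono (ENNReal.mul_ne_top (by simp) volume_DeltaR_ne_top) hle
  simp only [ENNReal.toReal_mul, ENNReal.toReal_natCast, ENNReal.toReal_prod,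
    ENNReal.toReal_pow] at volume_le
  unfold symQ volQ
  rw [← Finset.sum_div, ← add_div, ← Real.log_prod fun i _ => (volume_pos i).ne',
    ← Real.log_mul (by positivity) prod_pos.ne']
  gcongr
  rwa [div_mul_eq_mul_div, div_le_iff₀' (by positivity)]

theorem exists_eventually_symQ_add_sum_volQ_le [IsProbabilityMeasure μ]
    (hmeas : ∀ i, AEMeasurable (X i) μ) (hbdd : ∀ i, ∀ᵐ ω ∂μ, |X i ω| ≤ R)
    (hR : ∀ _ : Fin n, 0 < R) (m : ℕ) (hδ : 0 < δ) :
    ∃ (m' : ℕ) (δ' : ℝ), 0 < δ' ∧ ∀ᶠ N in atTop,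
      symQ μ X R N m' δ' + ∑ i, volQ μ (fun _ : Fin 1 => X i) R N m' δ' ≤ volQ μ X R N m δ := by
  obtain ⟨m', δ', hδ', hperm⟩ := exists_permuted_sortedDeltaR_mem_DeltaR μ X R m hδ
  refine ⟨m', δ', hδ', ?_⟩
  filter_upwards [eventually_DeltaR_nonempty hmeas hbdd m' hδ', eventually_all.2 fun i =>
    eventually_DeltaR_nonempty (fun _ : Fin 1 => hmeas i) (fun _ => hbdd i) m' hδ'] with N hN hNi
  exact symQ_add_sum_volQ_le (DeltaSymR_nonempty hN) (fun i => volume_DeltaR_pos (hR i) (hNi i))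
    (card_DeltaSymR_mul_prod_volume_le (hperm N))

end VolumeInequality

section Entropy

theorem diffEntropy_map_eq_bot_of_ae_eq_const {Ω E : Type*} [MeasurableSpace Ω]
    [MeasurableSpace E] [MeasurableSingletonClass E] {μ : Measure Ω} [NeZero μ]
    {vol : Measure E} [NullSingletonClass vol] {Y : Ω → E} {c : E} (hY : Y =ᵐ[μ] fun _ => c) :
    diffEntropy vol (μ.map Y) = ⊥ := by
  refine if_neg fun hac => ?_
  have := hac (measure_singleton c)
  rw [Measure.map_congr hY, Measure.map_const] at this
  simp [NeZero.ne] at this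

theorem sum_liminf_le_liminf_sum {ι α : Type*} {l : Filter α} (s : Finset ι) (u : ι → α → EReal) :
    ∑ i ∈ s, liminf (u i) l ≤ liminf (fun a => ∑ i ∈ s, u i a) l := by
  induction s using Finset.cons_induction with
  | empty => exact le_liminf_of_le (by isBoundedDefault) (by simp)
  | cons i s hi ih =>
    simp only [Finset.sum_cons]
    exact (add_le_add le_rfl ih).trans EReal.le_liminf_add

theorem ereal_coe_sum {ι : Type*} (s : Finset ι) (f : ι → ℝ) :
    ((∑ i ∈ s, f i : ℝ) : EReal) = ∑ i ∈ s, (f i : EReal) :=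
  map_sum (⟨⟨Real.toEReal, EReal.coe_zero⟩, EReal.coe_add⟩ : ℝ →+ EReal) f s

variable {Ω : Type*} [MeasurableSpace Ω] {μ : Measure Ω} {n : ℕ} {X : Fin n → Ω → ℝ} {R : ℝ}
  {δ : ℝ}

theorem neg_Isym_le_limsup_symQ (m : ℕ) (hδ : 0 < δ) :
    -Isym μ X R ≤ limsup (fun N => (symQ μ X R N m δ : EReal)) atTop := by
  rw [Isym, neg_neg]
  exact iInf_le_of_le m (iInf₂_le δ hδ)

theorem MicrostateVolumeFormula.diffEntropy_le_liminf_volQ (h : MicrostateVolumeFormula μ X R)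
    (m : ℕ) (hδ : 0 < δ) : diffEntropy volume (μ.map fun ω i => X i ω)
      ≤ liminf (fun N => (volQ μ X R N m δ : EReal)) atTop :=
  h.2.trans_le (iInf_le_of_le m (iInf₂_le δ hδ))

end Entropy

/-- Inequality (1.4): `∑ᵢ H(Xᵢ) - I_sym(X₁,…,Xₙ) ≤ H(X₁,…,Xₙ)` for bounded
random variables and `R ≥ maxᵢ ‖Xᵢ‖_∞`. -/
theorem stmt9 {Ω : Type*} [MeasurableSpace Ω] (μ : Measure Ω)
    [IsProbabilityMeasure μ] (n : ℕ) (X : Fin n → Ω → ℝ)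
    (hmeas : ∀ i, Measurable (X i)) (R : ℝ)
    (hbdd : ∀ i, ∀ᵐ ω ∂μ, |X i ω| ≤ R)
    (hvol : MicrostateVolumeFormula μ X R)
    (hvoli : ∀ i, MicrostateVolumeFormula μ (fun _ : Fin 1 => X i) R) :
    (∑ i, diffEntropy volume (Measure.map (fun ω (_ : Fin 1) => X i ω) μ))
        - Isym μ X R
      ≤ diffEntropy volume (Measure.map (fun ω (i : Fin n) => X i ω) μ) := by
  by_cases hbot : ∃ i, diffEntropy volume (Measure.map (fun ω (_ : Fin 1) => X i ω) μ) = ⊥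
  · obtain ⟨i, hi⟩ := hbot
    rw [← Finset.add_sum_erase _ _ (Finset.mem_univ i), hi]
    simp
  have hR (i : Fin n) : 0 < R := by
    by_contra! hR
    refine hbot ⟨i, diffEntropy_map_eq_bot_of_ae_eq_const (c := 0) ?_⟩
    filter_upwards [hbdd i] with ω hω
    exact funext fun _ => abs_nonpos_iff.1 (hω.trans hR)
  rw [hvol.1, sub_eq_add_neg, add_comm]
  refine le_iInf fun m => le_iInf₂ fun δ hδ => ?_
  obtain ⟨m', δ', hδ', hN⟩ :=
    exists_eventually_symQ_add_sum_volQ_le (fun i => (hmeas i).aemeasurable) hbdd hR m hδ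
  have marginals := (Finset.sum_le_sum fun i (_ : i ∈ Finset.univ) =>
    (hvoli i).diffEntropy_le_liminf_volQ m' hδ').trans (sum_liminf_le_liminf_sum _ _)
  refine (add_le_add (neg_Isym_le_limsup_symQ m' hδ') marginals).trans
    (EReal.le_limsup_add.trans (limsup_le_limsup ?_))
  filter_upwards [hN] with N hN
  have := EReal.coe_le_coe_iff.2 hN
  rwa [EReal.coe_add, ereal_coe_sum] at this
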